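/- arXiv:1011.1338 — 3 statements merged into one kernel-verified Lean document; each statement's English description precedes it below -/
import Mathlib

section
/- Let C be a finite candidate set with a distinguished candidate p, let v_1,…,v_n be votes on C, let δ > 0, and for each i let c_i assign to each unordered pair of distinct candidates a cost belonging to {0, δ}. Let E be an arbitrary function mapping n-tuples of votes on C to subsets of C (the set of winners under the election system E). Then the following are equivalent: (i) for each i there is a swap sequence transforming v_i into some vote u_i, transposing each pair at most once with every transposed pair of c_i-cost 0 (so the total cost of the bribery is 0), such that p ∈ E(u_1,…,u_n); (ii) there exist votes u_1,…,u_n such that each u_i is a linear extension of the transitive closure of the relation {(a,b) : a precedes b in v_i and c_i({a,b}) = δ}, and p ∈ E(u_1,…,u_n). (This states that Swap Bribery with costs in {0,δ} and budget zero is equivalent to the Possible Winner problem on the derived partial votes.) -/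
open Finset

/-- A vote on candidate set `C` with `m` candidates: a strict linear order on `C`,
given as a bijection mapping each candidate to its (0-based) position in `Fin m`,
position `0` being the most preferred. -/
abbrev Vote (C : Type*) (m : ℕ) := C ≃ Fin m

/-- The rank of candidate `c` in vote `v`, an element of `{1, …, m}`;
rank 1 is the most preferred position. -/
def rankOf {C : Type*} {m : ℕ} (v : Vote C m) (c : C) : ℕ := (v c : ℕ) + 1

/-- `IsSwapSeq v l u` : the list `l` records a sequence of adjacent transpositions
transforming vote `v` into vote `u`; each list entry `(a, b)` is the (oriented)
pair of candidates being transposed, where `a` is ranked directly above `b`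
in the current vote at the moment of the swap. -/
inductive IsSwapSeq {C : Type*} [DecidableEq C] {m : ℕ} :
    Vote C m → List (C × C) → Vote C m → Prop
  | nil (v : Vote C m) : IsSwapSeq v [] v
  | cons (v : Vote C m) (a b : C) (l : List (C × C)) (u : Vote C m)
      (hadj : (v a : ℕ) + 1 = (v b : ℕ))
      (htail : IsSwapSeq ((Equiv.swap a b).trans v) l u) :
      IsSwapSeq v ((a, b) :: l) u

/-- Oriented representatives of the unordered pairs of candidates that are ranked
in opposite relative order by votes `v` and `u` (each discordant unordered pair
`{a,b}` is represented by the unique orientation with `a` preferred to `b` in `v`). -/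
def discordantPairs {C : Type*} [Fintype C] [DecidableEq C] {m : ℕ}
    (v u : Vote C m) : Finset (C × C) :=
  Finset.univ.filter fun p => v p.1 < v p.2 ∧ u p.2 < u p.1

/-!
Transposing two neighbours changes the relative order of no other pair, so a swap sequence that
never moves a protected pair keeps the order of every protected pair. Conversely, whenever `v ≠ u`,
some two candidates that are neighbours in `v` stand in the opposite order in `u`; transposing them
removes exactly this pair from the set of discordant pairs. Iterating therefore transforms `v` into
`u` by transposing each discordant pair once and no other pair, and none of these pairs is protected
when `u` respects the protected pairs.
-/

theorem transGen_le_iff {α : Type*} {r s : α → α → Prop} [IsTrans α s] :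
    Relation.TransGen r ≤ s ↔ r ≤ s :=
  ⟨fun h a b hab ↦ h a b (.single hab), Relation.transGen_minimal⟩

section Order

variable {C α : Type*} [LinearOrder α]

theorem swap_lt_swap_iff_of_covBy [DecidableEq C] {f : C → α} (hf : Function.Injective f)
    {x y a b : C} (hxy : f x ⋖ f y) (hne : s(a, b) ≠ s(x, y)) :
    f (Equiv.swap x y a) < f (Equiv.swap x y b) ↔ f a < f b := by
  have hlt := hxy.lt
  have lt_iff_lt_of_ne (c : C) (hcx : c ≠ x) : f c < f x ↔ f c < f y :=
    ⟨fun h ↦ h.trans hlt, fun h ↦ (hxy.le_of_lt h).lt_of_ne (hf.ne hcx)⟩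
  have gt_iff_gt_of_ne (c : C) (hcy : c ≠ y) : f x < f c ↔ f y < f c :=
    ⟨fun h ↦ (hxy.ge_of_gt h).lt_of_ne' (hf.ne hcy), hlt.trans⟩
  simp only [Equiv.swap_apply_def]
  grind [Sym2.eq_iff]

theorem exists_covBy_and_lt_of_ne [LocallyFiniteOrder α] [WellFoundedLT α] {v u : C ≃ α}
    (hne : v ≠ u) : ∃ a b, v a ⋖ v b ∧ u b < u a := by
  by_contra! hle
  have hmono : StrictMono (v.symm.trans u) := by
    refine (strictMono_iff_forall_covBy _).2 fun i j hij ↦ ?_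
    refine (hle _ _ (by simpa using hij)).lt_of_ne fun heq ↦ hij.ne ?_
    exact v.symm.injective (u.injective heq)
  have hid : hmono.orderIsoOfSurjective _ (v.symm.trans u).surjective = OrderIso.refl α :=
    Subsingleton.elim _ _
  refine hne (Equiv.ext fun c ↦ ?_)
  simpa using (DFunLike.congr_fun hid (v c)).symm

end Order

section Swaps

variable {C : Type*} [DecidableEq C] {m : ℕ} {v u : Vote C m}

theorem IsSwapSeq.lt_iff_lt {l : List (C × C)} (h : IsSwapSeq v l u) {a b : C}
    (hab : s(a, b) ∉ l.map fun q ↦ s(q.1, q.2)) : u a < u b ↔ v a < v b := by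
  induction h with
  | nil v => rfl
  | cons v x y l u hadj _ ih =>
    rw [List.map_cons, List.mem_cons, not_or] at hab
    exact (ih hab.2).trans (swap_lt_swap_iff_of_covBy v.injective (by simpa using hadj) hab.1)

section DiscordantPairs

variable [Fintype C]

theorem mem_discordantPairs {q : C × C} :
    q ∈ discordantPairs v u ↔ v q.1 < v q.2 ∧ u q.2 < u q.1 := by
  simp [discordantPairs]

theorem discordantPairs_self (v : Vote C m) : discordantPairs v v = ∅ :=
  filter_eq_empty_iff.2 fun _ _ h ↦ lt_asymm h.1 h.2

theorem injOn_sym2Mk_discordantPairs :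
    Set.InjOn (fun q : C × C ↦ s(q.1, q.2)) (discordantPairs v u) := by
  rintro ⟨a, b⟩ hab ⟨x, y⟩ hxy heq
  rcases Sym2.eq_iff.1 heq with ⟨rfl, rfl⟩ | ⟨rfl, rfl⟩
  · rfl
  · exact absurd (mem_discordantPairs.1 hab).1 (mem_discordantPairs.1 hxy).1.not_gt

theorem discordantPairs_swap_trans {a b : C} (hv : v a ⋖ v b) (hu : u b < u a) :
    discordantPairs ((Equiv.swap a b).trans v) u = (discordantPairs v u).erase (a, b) := by
  ext ⟨x, y⟩
  simp only [mem_erase, mem_discordantPairs, Equiv.trans_apply]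
  by_cases hxy : s(x, y) = s(a, b)
  · rcases Sym2.eq_iff.1 hxy with ⟨rfl, rfl⟩ | ⟨rfl, rfl⟩
    · simp [hv.lt.not_gt]
    · simp [hu.not_gt]
  · have hne : (x, y) ≠ (a, b) := fun h ↦ hxy (congrArg (fun q ↦ s(q.1, q.2)) h)
    simp [swap_lt_swap_iff_of_covBy v.injective hv hxy, hne]

theorem exists_isSwapSeq_toFinset_eq_discordantPairs (v u : Vote C m) :
    ∃ l, IsSwapSeq v l u ∧ l.Nodup ∧ l.toFinset = discordantPairs v u := by
  induction hs : discordantPairs v u using Finset.strongInduction generalizing v with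
  | H s ih =>
    subst hs
    obtain rfl | hne := eq_or_ne v u
    · exact ⟨[], .nil v, List.nodup_nil, (discordantPairs_self v).symm⟩
    obtain ⟨a, b, hv, hu⟩ := exists_covBy_and_lt_of_ne hne
    have hab : (a, b) ∈ discordantPairs v u := mem_discordantPairs.2 ⟨hv.lt, hu⟩
    have herase := discordantPairs_swap_trans hv hu
    obtain ⟨l, hl, hnodup, hmem⟩ := ih _ (erase_ssubset hab) _ herase
    have hnotMem : (a, b) ∉ l := by simp [← List.mem_toFinset, hmem]
    refine ⟨(a, b) :: l, .cons v a b l u (by simpa using hv) hl, hnodup.cons hnotMem, ?_⟩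
    rw [List.toFinset_cons, hmem, insert_erase hab]

end DiscordantPairs

theorem exists_isSwapSeq_avoiding_iff (v u : Vote C m) (F : Set (Sym2 C)) :
    (∃ l, IsSwapSeq v l u ∧ (l.map fun q ↦ s(q.1, q.2)).Nodup ∧ ∀ q ∈ l, s(q.1, q.2) ∉ F) ↔
      ∀ a b, v a < v b → s(a, b) ∈ F → u a < u b := by
  constructor
  · rintro ⟨l, hl, -, havoid⟩ a b hab hF
    refine (hl.lt_iff_lt fun hmem ↦ ?_).2 hab
    obtain ⟨q, hq, heq⟩ := List.mem_map.1 hmem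
    exact havoid q hq (heq ▸ hF)
  · intro hext
    have : Fintype C := .ofEquiv _ v.symm
    obtain ⟨l, hl, hnodup, hmem⟩ := exists_isSwapSeq_toFinset_eq_discordantPairs v u
    have hdisc (q : C × C) (hq : q ∈ l) : q ∈ discordantPairs v u :=
      hmem ▸ List.mem_toFinset.2 hq
    refine ⟨l, hl, hnodup.map_on fun q hq r hr ↦ ?_, fun q hq hF ↦ ?_⟩
    · exact injOn_sym2Mk_discordantPairs (hdisc q hq) (hdisc r hr)
    · obtain ⟨hv, hu⟩ := mem_discordantPairs.1 (hdisc q hq)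
      exact (hext q.1 q.2 hv hF).not_gt hu

end Swaps

theorem swap_bribery_budget_zero_iff_possible_winner_general
    {C ι R : Type*} [DecidableEq C] [Zero R] {m : ℕ}
    (p : C) (v : ι → Vote C m) (δ : R) (hδ : δ ≠ 0)
    (cost : ι → Sym2 C → R)
    (hcost : ∀ i s, cost i s = 0 ∨ cost i s = δ)
    (E : (ι → Vote C m) → Set C) :
    (∃ u : ι → Vote C m,
        (∀ i, ∃ l : List (C × C), IsSwapSeq (v i) l (u i) ∧
          (l.map fun q ↦ s(q.1, q.2)).Nodup ∧
          ∀ q ∈ l, cost i s(q.1, q.2) = 0) ∧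
        p ∈ E u) ↔
    (∃ u : ι → Vote C m,
        (∀ i, ∀ a b : C,
          Relation.TransGen (fun x y ↦ v i x < v i y ∧ cost i s(x, y) = δ) a b →
            u i a < u i b) ∧
        p ∈ E u) := by
  have hzero (i : ι) (s : Sym2 C) : cost i s = 0 ↔ s ∉ {t | cost i t = δ} :=
    ⟨fun h h' ↦ hδ (h'.symm.trans h), (hcost i s).resolve_right⟩
  refine exists_congr fun u ↦ and_congr_left' (forall_congr' fun i ↦ ?_)
  have : IsTrans C fun a b ↦ u i a < u i b := ⟨fun _ _ _ ↦ lt_trans⟩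
  simp only [hzero]
  rw [exists_isSwapSeq_avoiding_iff]
  refine .trans ?_ (transGen_le_iff (s := fun a b ↦ u i a < u i b)).symm
  exact forall₂_congr fun a b ↦ and_imp.symm

/-- Swap Bribery with costs in `{0, δ}` (`δ > 0`) and budget zero is
equivalent to the Possible Winner problem on the derived partial votes: for any election
system `E` (mapping tuples of votes to sets of winners) and preferred candidate `p`, the
votes `v_1, …, v_n` can be bribed at zero cost so that `p` wins if and only if each
`v_i` can be replaced by a linear extension of the transitive closure of
`{(a,b) : a precedes b in v_i and c_i({a,b}) = δ}` so that `p` wins. -/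
theorem swap_bribery_budget_zero_iff_possible_winner
    {C : Type*} [Fintype C] [DecidableEq C] {m n : ℕ}
    (p : C) (v : Fin n → Vote C m) (δ : ℕ) (hδ : 0 < δ)
    (cost : Fin n → Sym2 C → ℕ)
    (hcost : ∀ i s, cost i s = 0 ∨ cost i s = δ)
    (E : (Fin n → Vote C m) → Finset C) :
    (∃ u : Fin n → Vote C m,
        (∀ i, ∃ l : List (C × C), IsSwapSeq (v i) l (u i) ∧
          (l.map fun q => s(q.1, q.2)).Nodup ∧
          ∀ q ∈ l, cost i s(q.1, q.2) = 0) ∧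
        p ∈ E u) ↔
    (∃ u : Fin n → Vote C m,
        (∀ i, ∀ a b : C,
          Relation.TransGen (fun x y => v i x < v i y ∧ cost i s(x, y) = δ) a b →
            u i a < u i b) ∧
        p ∈ E u) :=
  swap_bribery_budget_zero_iff_possible_winner_general p v δ hδ.ne' cost hcost fun u ↦ ↑(E u)
end

section
/- Let G be an undirected graph on vertices x_1,…,x_N with N ≥ 2 and let 1 ≤ k ≤ N; construct the single-vote Swap Bribery instance (C, w, cost) as described, and set the budget β = (N−k)·N² + k·N − k(k−1)/2. Then there exists a vote u on C with rank(p,u) ≤ k+1 such that the total cost Σ cost({a,b}), taken over all pairs {a,b} discordant between w and u, is at most β, if and only if G contains a clique of size k. (Equivalently: the constructed Swap Bribery instance for (k+1)-approval with the single vote w, preferred candidate p and budget β has a solution if and only if G has a k-clique.) -/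
open Finset

/-- The candidate set of the single-vote Swap Bribery instance constructed from a graph
on `N` vertices and a parameter `k`: dummies `d_1, …, d_{k+1}` (the summand `Fin (k+1)`),
the vertex candidates `c_1, …, c_N` (the summand `Fin N`), and the preferred candidate
`p` (the summand `Fin 1`); in total `N + k + 2` candidates. -/
abbrev BriberyCand (N k : ℕ) := Fin (k + 1) ⊕ (Fin N ⊕ Fin 1)

/-- The dummy candidate `d_j` (for `j : Fin (k+1)`). -/
abbrev BriberyCand.d {N k : ℕ} (j : Fin (k + 1)) : BriberyCand N k := Sum.inl j

/-- The vertex candidate `c_i` (for `i : Fin N`). -/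
abbrev BriberyCand.c {N k : ℕ} (i : Fin N) : BriberyCand N k := Sum.inr (Sum.inl i)

/-- The preferred candidate `p`. -/
abbrev BriberyCand.p {N k : ℕ} : BriberyCand N k := Sum.inr (Sum.inr 0)

/-- The single vote `w : d_1 ≻ … ≻ d_{k+1} ≻ c_1 ≻ … ≻ c_N ≻ p` of the constructed
Swap Bribery instance. -/
def briberyVote (N k : ℕ) : Vote (BriberyCand N k) ((k + 1) + (N + 1)) :=
  (Equiv.sumCongr (Equiv.refl (Fin (k + 1))) finSumFinEquiv).trans finSumFinEquiv

/-- The cost function of the constructed Swap Bribery instance, as a symmetric function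
of the two members of the swapped pair: swapping `c_i` and `c_j` costs `1` if `x_i x_j`
is an edge of `G` and `0` otherwise; swapping `d_1` and `c_i` costs
`N − |{j < i : x_j x_i ∈ E(G)}|`; swapping `c_i` and `p` costs `N²`; every other swap
costs `0`. -/
def briberyCost {N : ℕ} (G : SimpleGraph (Fin N)) [DecidableRel G.Adj] (k : ℕ) :
    BriberyCand N k → BriberyCand N k → ℕ
  | Sum.inr (Sum.inl i), Sum.inr (Sum.inl j) => if G.Adj i j then 1 else 0
  | Sum.inl d, Sum.inr (Sum.inl i) =>
      if d = 0 then N - (Finset.univ.filter fun j => j < i ∧ G.Adj j i).card else 0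
  | Sum.inr (Sum.inl i), Sum.inl d =>
      if d = 0 then N - (Finset.univ.filter fun j => j < i ∧ G.Adj j i).card else 0
  | Sum.inr (Sum.inl _), Sum.inr (Sum.inr _) => N ^ 2
  | Sum.inr (Sum.inr _), Sum.inr (Sum.inl _) => N ^ 2
  | _, _ => 0

/-! Let `A` be the set of vertices whose candidates beat `p` in the bribed vote. Each other vertex
pays `N²`, and `p` has only `k` places above it, so the budget forces `#A = k`. Then `A` fills those
places, `d₁` drops below `p`, and a vertex `i ∈ A` pays `N` minus the number of its earlier
neighbours, plus `1` for every earlier neighbour outside `A`, which it must overtake. What is left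
of the discount is one unit for each of the `e` edges inside `A`, so the total cost is at least
`(N - k) * N² + k * N - e`, with equality when `A` and its complement each keep the order of `w`
and the complement stays behind the dummies. The budget thus asks for `e = k.choose 2`, that is,
for `A` to be a clique. -/

section OrderedGraph

variable {V : Type*} [LinearOrder V] (G : SimpleGraph V) [DecidableRel G.Adj]

/-- The edges of `G` with both endpoints in `A`, each listed once, smaller endpoint first. -/
def edgesWithin (A : Finset V) : Finset (V × V) :=
  {q ∈ A ×ˢ A | q.1 < q.2 ∧ G.Adj q.1 q.2}

theorem isClique_iff_card_edgesWithin (A : Finset V) :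
    G.IsClique A ↔ #(edgesWithin G A) = (#A).choose 2 := by
  rw [edgesWithin, ← filter_filter, ← card_product_filter_lt, card_filter_eq_iff]
  simp only [mem_filter, mem_product, and_imp, Prod.forall]
  refine ⟨fun hA i j hi hj hij => hA hi hj hij.ne, fun hA i hi j hj hij => ?_⟩
  rcases hij.lt_or_gt with h | h
  · exact hA i j hi hj h
  · exact (hA j i hj hi h).symm

theorem card_edgesWithin_le (A : Finset V) : #(edgesWithin G A) ≤ (#A).choose 2 := by
  rw [edgesWithin, ← filter_filter, ← card_product_filter_lt]
  exact card_filter_le _ _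

variable [Fintype V]

/-- The neighbours of `i` that precede it in the vertex order; their number is what the cost of
`{d₁, cᵢ}` discounts. -/
def earlierNeighbors (i : V) : Finset V :=
  univ.filter fun j => j < i ∧ G.Adj j i

theorem mem_earlierNeighbors {i j : V} : j ∈ earlierNeighbors G i ↔ j < i ∧ G.Adj j i := by
  simp only [earlierNeighbors, mem_filter, mem_univ, true_and]

theorem card_edgesWithin_eq_sum (A : Finset V) :
    #(edgesWithin G A) = ∑ i ∈ A, #(earlierNeighbors G i ∩ A) := by
  simp only [edgesWithin, card_filter, sum_product_right]
  refine sum_congr rfl fun i _ => ?_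
  rw [← card_filter]
  congr 1
  ext j
  simp only [mem_filter, mem_inter, mem_earlierNeighbors, and_comm]

theorem sum_add_card_edgesWithin (A : Finset V) :
    ∑ i ∈ A, (Fintype.card V - #(earlierNeighbors G i)) + ∑ i ∈ A, #(earlierNeighbors G i \ A) +
      #(edgesWithin G A) = #A * Fintype.card V := by
  rw [card_edgesWithin_eq_sum, ← sum_add_distrib, ← sum_add_distrib, ← smul_eq_mul, ← sum_const]
  refine sum_congr rfl fun i _ => ?_
  rw [add_assoc, card_sdiff_add_card_inter, Nat.sub_add_cancel (card_le_univ _)]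

end OrderedGraph

section Votes

variable {C : Type*} {m : ℕ}

theorem card_lt_rankOf (u : Vote C m) {c : C} {s : Finset C} (hs : ∀ x ∈ s, u x < u c) :
    #s < rankOf u c := by
  rw [rankOf, ← Fin.card_Iio, Nat.lt_succ_iff]
  exact card_le_card_of_injOn u (fun x hx => by simpa using hs x hx) u.injective.injOn

theorem rankOf_le_card_add_one (u : Vote C m) {c : C} {s : Finset C}
    (hs : ∀ x, u x < u c → x ∈ s) : rankOf u c ≤ #s + 1 := by
  rw [rankOf, ← Fin.card_Iio, ← card_map u.toEmbedding]
  refine Nat.succ_le_succ (card_le_card fun i hi => ?_)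
  exact mem_map_equiv.2 (hs _ (by simpa using hi))

variable {α : Type*} [LinearOrder α]

/-- The vote listing the candidates by increasing value of `block`, and inside each block in the
order of `w` (`Tuple.sort` is stable). -/
def regroup (w : Vote C m) (block : C → α) : Vote C m :=
  w.trans (Tuple.sort (block ∘ w.symm)).symm

theorem regroup_lt_iff (w : Vote C m) (block : C → α) (a b : C) :
    regroup w block a < regroup w block b ↔
      block a < block b ∨ block a = block b ∧ w a < w b := by
  obtain ⟨hmono, hstable⟩ := Tuple.eq_sort_iff.1 (rfl : Tuple.sort (block ∘ w.symm) = _)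
  have sorted : ∀ a b, regroup w block a < regroup w block b →
      block a < block b ∨ block a = block b ∧ w a < w b := by
    intro a b hab
    have hle : block a ≤ block b := by simpa [regroup] using hmono hab.le
    refine hle.lt_or_eq.imp_right fun heq => ⟨heq, ?_⟩
    simpa [regroup] using hstable _ _ hab (by simpa [regroup] using heq)
  refine ⟨sorted a b, fun h => ?_⟩
  by_contra hba
  rcases (not_lt.1 hba).lt_or_eq with hlt | heq
  · rcases h with h | h <;> rcases sorted b a hlt with h' | h' <;> order
  · obtain rfl := (regroup w block).injective heq
    simp at h

end Votes

section Bribery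

variable {N k : ℕ}

theorem mul_sub_choose_two_lt_sq (hN : 2 ≤ N) (hkN : k ≤ N) :
    k * N - k.choose 2 < N ^ 2 := by
  rcases hkN.lt_or_eq with hlt | rfl
  · have hmul : k * N < N ^ 2 := by rw [sq]; exact Nat.mul_lt_mul_of_pos_right hlt (by omega)
    omega
  · have hchoose : 0 < k.choose 2 := Nat.choose_pos hN
    rw [sq]
    exact Nat.sub_lt (by positivity) hchoose

theorem choose_two_le_mul (hkN : k ≤ N) : k.choose 2 ≤ k * N :=
  calc k.choose 2 ≤ k * (k - 1) := by rw [Nat.choose_two_right]; exact Nat.div_le_self _ _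
    _ ≤ k * N := by gcongr; omega

theorem briberyVote_d_lt_c (d : Fin (k + 1)) (i : Fin N) :
    briberyVote N k (BriberyCand.d d) < briberyVote N k (BriberyCand.c i) := by
  simp only [briberyVote, Fin.lt_def, Equiv.trans_apply, Equiv.sumCongr_apply, Sum.map_inl,
    Sum.map_inr, finSumFinEquiv_apply_left, finSumFinEquiv_apply_right, Equiv.refl_apply,
    Fin.val_castAdd, Fin.val_natAdd]
  omega

theorem briberyVote_c_lt_c {i j : Fin N} :
    briberyVote N k (BriberyCand.c i) < briberyVote N k (BriberyCand.c j) ↔ i < j := by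
  simp only [briberyVote, Equiv.trans_apply, Equiv.sumCongr_apply, Sum.map_inr,
    finSumFinEquiv_apply_left, finSumFinEquiv_apply_right, Fin.lt_def, Fin.val_natAdd,
    Fin.val_castAdd, add_lt_add_iff_left]

theorem briberyVote_c_lt_p (i : Fin N) :
    briberyVote N k (BriberyCand.c i) < briberyVote N k BriberyCand.p := by
  simp [briberyVote, Fin.lt_def]

/-- The vertices whose candidates beat `p` in the vote `u`; for a vote within the budget this is
the clique. -/
def promoted (u : Vote (BriberyCand N k) ((k + 1) + (N + 1))) : Finset (Fin N) :=
  {i | u (BriberyCand.c i) < u BriberyCand.p}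

theorem mem_promoted {u : Vote (BriberyCand N k) ((k + 1) + (N + 1))} {i : Fin N} :
    i ∈ promoted u ↔ u (BriberyCand.c i) < u BriberyCand.p := by
  simp only [promoted, mem_filter, mem_univ, true_and]

/-- The embedding of the vertices as vertex candidates. -/
def vertexCand (N k : ℕ) : Fin N ↪ BriberyCand N k :=
  Function.Embedding.inl.trans Function.Embedding.inr

theorem card_promoted_lt_rankOf (u : Vote (BriberyCand N k) ((k + 1) + (N + 1))) :
    #(promoted u) < rankOf u BriberyCand.p := by
  rw [← card_map (vertexCand N k)]
  refine card_lt_rankOf u ?_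
  rw [forall_mem_map]
  exact fun i hi => mem_promoted.1 hi

theorem p_lt_d_of_rankOf_le {u : Vote (BriberyCand N k) ((k + 1) + (N + 1))} (d : Fin (k + 1))
    (hrank : rankOf u BriberyCand.p ≤ #(promoted u) + 1) :
    u BriberyCand.p < u (BriberyCand.d d) := by
  by_contra hle
  have hd : u (BriberyCand.d d) < u BriberyCand.p :=
    (not_lt.1 hle).lt_of_ne (u.injective.ne Sum.inl_ne_inr)
  have hcard : #(insert (BriberyCand.d d) ((promoted u).map (vertexCand N k))) <
      rankOf u BriberyCand.p := by
    refine card_lt_rankOf u ?_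
    rw [forall_mem_insert, forall_mem_map]
    exact ⟨hd, fun i hi => mem_promoted.1 hi⟩
  rw [card_insert_of_notMem (by simp [vertexCand]), card_map] at hcard
  omega

variable (G : SimpleGraph (Fin N)) [DecidableRel G.Adj]

/-- The cost of bribing the voter of the instance built from `G` to cast the vote `u`. -/
def briberyTotalCost (u : Vote (BriberyCand N k) ((k + 1) + (N + 1))) : ℕ :=
  ∑ q ∈ discordantPairs (briberyVote N k) u, briberyCost G k q.1 q.2

theorem briberyTotalCost_eq_sum_ite (u : Vote (BriberyCand N k) ((k + 1) + (N + 1))) :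
    briberyTotalCost G u =
      (∑ d : Fin (k + 1), ∑ i, if u (BriberyCand.c i) < u (BriberyCand.d d) then
        briberyCost G k (BriberyCand.d d) (BriberyCand.c i) else 0) +
      ((∑ i, ∑ j, if i < j ∧ u (BriberyCand.c j) < u (BriberyCand.c i) then
        briberyCost G k (BriberyCand.c i) (BriberyCand.c j) else 0) +
      ∑ i, if u BriberyCand.p < u (BriberyCand.c i) then
        briberyCost G k (BriberyCand.c i) BriberyCand.p else 0) := by
  have hdd (d e) : briberyCost G k (BriberyCand.d d) (BriberyCand.d e) = 0 := rfl
  have hdp (d) : briberyCost G k (BriberyCand.d d) BriberyCand.p = 0 := rfl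
  have hpd (d) : briberyCost G k BriberyCand.p (BriberyCand.d d) = 0 := rfl
  have hpp : briberyCost G k BriberyCand.p BriberyCand.p = 0 := rfl
  rw [briberyTotalCost, discordantPairs, sum_filter, Fintype.sum_prod_type]
  simp only [Fintype.sum_sum_type, Fin.sum_univ_one, hdd, hdp, hpd, hpp, briberyVote_d_lt_c,
    (briberyVote_d_lt_c _ _).not_gt, briberyVote_c_lt_c, briberyVote_c_lt_p,
    (briberyVote_c_lt_p _).not_gt, true_and, false_and, if_false, ite_self, sum_const_zero,
    zero_add, add_zero, sum_add_distrib, add_assoc]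

theorem briberyTotalCost_eq (u : Vote (BriberyCand N k) ((k + 1) + (N + 1))) :
    briberyTotalCost G u =
      ∑ i with u (BriberyCand.c i) < u (BriberyCand.d 0), (N - #(earlierNeighbors G i)) +
      (∑ i, #{j ∈ earlierNeighbors G i | u (BriberyCand.c i) < u (BriberyCand.c j)} +
      (N - #(promoted u)) * N ^ 2) := by
  rw [briberyTotalCost_eq_sum_ite]
  congr 1
  · rw [sum_eq_single_of_mem 0 (mem_univ _) fun d _ hd => by simp [briberyCost, hd], sum_filter]
    rfl
  congr 1
  · rw [sum_comm]
    refine sum_congr rfl fun i _ => ?_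
    simp only [briberyCost, ← ite_and, earlierNeighbors, filter_filter, card_filter]
    exact sum_congr rfl fun j _ => if_congr and_right_comm rfl rfl
  · have hbehind : ({i | u BriberyCand.p < u (BriberyCand.c i)} : Finset (Fin N)) =
        (promoted u)ᶜ := by
      ext i
      have hne : u BriberyCand.p ≠ u (BriberyCand.c i) := u.injective.ne (by simp)
      simp only [mem_filter, mem_univ, true_and, mem_compl, mem_promoted, not_lt, hne.le_iff_lt]
    rw [← sum_filter, hbehind]
    simp only [briberyCost, sum_const, card_compl, Fintype.card_fin, smul_eq_mul]

theorem le_briberyTotalCost_add_card_edgesWithin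
    {u : Vote (BriberyCand N k) ((k + 1) + (N + 1))}
    (hpd : u BriberyCand.p < u (BriberyCand.d 0)) :
    (N - #(promoted u)) * N ^ 2 + #(promoted u) * N ≤
      briberyTotalCost G u + #(edgesWithin G (promoted u)) := by
  have hdc : ∑ i ∈ promoted u, (N - #(earlierNeighbors G i)) ≤
      ∑ i with u (BriberyCand.c i) < u (BriberyCand.d 0), (N - #(earlierNeighbors G i)) := by
    refine sum_le_sum_of_subset fun i hi => ?_
    simpa using (mem_promoted.1 hi).trans hpd
  have hcc : ∑ i ∈ promoted u, #(earlierNeighbors G i \ promoted u) ≤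
      ∑ i, #{j ∈ earlierNeighbors G i | u (BriberyCand.c i) < u (BriberyCand.c j)} := by
    refine (sum_le_sum fun i hi => card_le_card fun j hj => ?_).trans
      (sum_le_sum_of_subset (subset_univ _))
    obtain ⟨hj, hjA⟩ := mem_sdiff.1 hj
    have hpj : u BriberyCand.p ≤ u (BriberyCand.c j) := not_lt.1 (mt mem_promoted.2 hjA)
    exact mem_filter.2 ⟨hj, (mem_promoted.1 hi).trans_le hpj⟩
  have hsum := sum_add_card_edgesWithin G (promoted u)
  rw [Fintype.card_fin] at hsum
  rw [briberyTotalCost_eq]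
  omega

/-- The index of a candidate's block in `promotingVote k A`, counted from the top. -/
def promotionBlock (A : Finset (Fin N)) : BriberyCand N k → ℕ
  | Sum.inl _ => 2
  | Sum.inr (Sum.inl i) => if i ∈ A then 0 else 3
  | Sum.inr (Sum.inr _) => 1

/-- The vote `(cᵢ for i ∈ A) ≻ p ≻ d₁ ≻ … ≻ d_{k+1} ≻ (cᵢ for i ∉ A)`, which promotes exactly the
vertices of `A` at the least cost. -/
def promotingVote (k : ℕ) (A : Finset (Fin N)) : Vote (BriberyCand N k) ((k + 1) + (N + 1)) :=
  regroup (briberyVote N k) (promotionBlock A)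

variable (A : Finset (Fin N))

theorem promoted_promotingVote : promoted (promotingVote k A) = A := by
  ext i
  by_cases hi : i ∈ A <;> simp [mem_promoted, promotingVote, regroup_lt_iff, promotionBlock, hi]

theorem promotingVote_c_lt_d_iff {i : Fin N} {d : Fin (k + 1)} :
    promotingVote k A (BriberyCand.c i) < promotingVote k A (BriberyCand.d d) ↔ i ∈ A := by
  by_cases hi : i ∈ A <;> simp [promotingVote, regroup_lt_iff, promotionBlock, hi]

theorem promotingVote_c_lt_c_iff {i j : Fin N} (hji : j < i) :
    promotingVote k A (BriberyCand.c i) < promotingVote k A (BriberyCand.c j) ↔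
      i ∈ A ∧ j ∉ A := by
  by_cases hi : i ∈ A <;> by_cases hj : j ∈ A <;>
    simp [promotingVote, regroup_lt_iff, promotionBlock, briberyVote_c_lt_c, hi, hj, hji.le]

theorem filter_earlierNeighbors_promotingVote (i : Fin N) :
    {j ∈ earlierNeighbors G i |
        promotingVote k A (BriberyCand.c i) < promotingVote k A (BriberyCand.c j)} =
      if i ∈ A then earlierNeighbors G i \ A else ∅ := by
  rw [filter_congr fun j hj => promotingVote_c_lt_c_iff A ((mem_earlierNeighbors G).1 hj).1]
  by_cases hi : i ∈ A
  · simp only [hi, true_and, if_true, filter_notMem_eq_sdiff]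
  · simp only [hi, false_and, if_false, filter_false]

theorem rankOf_promotingVote_le : rankOf (promotingVote k A) BriberyCand.p ≤ #A + 1 := by
  rw [← card_map (vertexCand N k)]
  refine rankOf_le_card_add_one _ fun x hx => ?_
  rcases x with d | i | q
  · simp [promotingVote, regroup_lt_iff, promotionBlock] at hx
  · have hi : i ∈ A := by rwa [← mem_promoted, promoted_promotingVote] at hx
    exact mem_map_of_mem _ hi
  · rw [Subsingleton.elim q 0] at hx
    exact absurd hx (lt_irrefl _)

theorem briberyTotalCost_promotingVote_add_card_edgesWithin :
    briberyTotalCost G (promotingVote k A) + #(edgesWithin G A) =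
      (N - #A) * N ^ 2 + #A * N := by
  have hcc : ∑ i, #{j ∈ earlierNeighbors G i |
        promotingVote k A (BriberyCand.c i) < promotingVote k A (BriberyCand.c j)} =
      ∑ i ∈ A, #(earlierNeighbors G i \ A) := by
    rw [← sum_subset (subset_univ A)]
    · refine sum_congr rfl fun i hi => ?_
      rw [filter_earlierNeighbors_promotingVote, if_pos hi]
    · intro i _ hi
      rw [filter_earlierNeighbors_promotingVote, if_neg hi, card_empty]
  have hsum := sum_add_card_edgesWithin G A
  rw [Fintype.card_fin] at hsum
  rw [briberyTotalCost_eq, hcc, promoted_promotingVote]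
  simp only [promotingVote_c_lt_d_iff, filter_univ_mem]
  omega

theorem card_promoted_eq (hN : 2 ≤ N) (hkN : k ≤ N)
    {u : Vote (BriberyCand N k) ((k + 1) + (N + 1))} (hrank : rankOf u BriberyCand.p ≤ k + 1)
    (hcost : briberyTotalCost G u ≤ (N - k) * N ^ 2 + k * N - k.choose 2) :
    #(promoted u) = k := by
  have hle : #(promoted u) ≤ k := Nat.lt_succ_iff.1 ((card_promoted_lt_rankOf u).trans_le hrank)
  refine hle.antisymm (not_lt.1 fun hlt => ?_)
  have hbehind : (N - k + 1) * N ^ 2 ≤ briberyTotalCost G u := by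
    rw [briberyTotalCost_eq]
    calc (N - k + 1) * N ^ 2 ≤ (N - #(promoted u)) * N ^ 2 := by gcongr; omega
      _ ≤ _ := (Nat.le_add_left _ _).trans (Nat.le_add_left _ _)
  have hbudget := mul_sub_choose_two_lt_sq hN hkN
  rw [add_one_mul] at hbehind
  omega

end Bribery

/-- In the Swap Bribery instance constructed from a graph `G` on `N ≥ 2`
vertices and `1 ≤ k ≤ N`, with budget `β = (N−k)·N² + k·N − k(k−1)/2`, there is a vote
`u` with `rank(p,u) ≤ k+1` (i.e. `p` gets a point under `(k+1)`-approval) whose total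
discordance cost with `w` is at most `β`, if and only if `G` contains a clique of size
`k`. -/
theorem bribery_instance_solvable_iff_clique
    {N k : ℕ} (hN : 2 ≤ N) (hk1 : 1 ≤ k) (hkN : k ≤ N)
    (G : SimpleGraph (Fin N)) [DecidableRel G.Adj] :
    (∃ u : Vote (BriberyCand N k) ((k + 1) + (N + 1)),
        rankOf u BriberyCand.p ≤ k + 1 ∧
        ∑ q ∈ discordantPairs (briberyVote N k) u, briberyCost G k q.1 q.2 ≤
          (N - k) * N ^ 2 + k * N - k * (k - 1) / 2) ↔
    ∃ S : Finset (Fin N), G.IsNClique k S := by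
  rw [← Nat.choose_two_right]
  constructor
  · rintro ⟨u, hrank, hcost⟩
    have hcard : #(promoted u) = k := card_promoted_eq G hN hkN hrank hcost
    have hpd : u BriberyCand.p < u (BriberyCand.d 0) :=
      p_lt_d_of_rankOf_le 0 (by rwa [hcard])
    have hlower := le_briberyTotalCost_add_card_edgesWithin G hpd
    have hedges := card_edgesWithin_le G (promoted u)
    rw [hcard] at hlower hedges
    have hbudget := choose_two_le_mul hkN
    refine ⟨promoted u, (isClique_iff_card_edgesWithin G _).2 ?_, hcard⟩
    rw [hcard]
    change briberyTotalCost G u ≤ _ at hcost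
    omega
  · rintro ⟨S, hclique, rfl⟩
    refine ⟨promotingVote #S S, rankOf_promotingVote_le S, ?_⟩
    rw [← (isClique_iff_card_edgesWithin G S).1 hclique]
    exact (Nat.eq_sub_of_add_eq
      (briberyTotalCost_promotingVote_add_card_edgesWithin G S)).le
end

section
/- Let v_1,…,v_n be votes on a finite set of m candidates, let 1 ≤ k ≤ m, and let u_1,…,u_n be votes such that for each i the number of pairs discordant between v_i and u_i is at most β. If a candidate c satisfies rank(c,v_i) > k + β for every i, then rank(c,u_i) > k for every i, so the k-approval score of c in (u_1,…,u_n) is 0. (Hence, when every swap costs at least 1 and the budget is β, every candidate ranked below position k+β in all votes can be deleted from a Swap Bribery instance for k-approval without changing the answer.) -/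
open Finset

/-!
The position of `c` in a vote is the number of candidates ranked above `c`. A candidate above `c` in
`v` either stays above `c` in `u` or forms a discordant pair with `c`, and distinct candidates give
distinct pairs, so from `v` to `u` the rank of `c` drops by at most the number of discordant pairs.
-/

theorem card_filter_lt_le_add_card_filter_lt_and_lt {C α γ : Type*} [Fintype C] [Preorder α]
    [DecidableLT α] [LinearOrder γ] (f : C → α) {g : C → γ} (hg : g.Injective) (c : C) :
    #{a | f a < f c} ≤ #{a | g a < g c} + #{a | f a < f c ∧ g c < g a} := by
  classical
  have ahead_or_overtaken (a : C) (ha : f a < f c) : g a < g c ∨ f a < f c ∧ g c < g a :=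
    (hg.ne (ne_of_apply_ne f ha.ne)).lt_or_gt.imp_right fun hgt => ⟨ha, hgt⟩
  calc
    #{a | f a < f c} ≤ #{a | g a < g c ∨ f a < f c ∧ g c < g a} :=
      card_le_card (monotone_filter_right _ fun a _ => ahead_or_overtaken a)
    _ ≤ #{a | g a < g c} + #{a | f a < f c ∧ g c < g a} := by
      rw [filter_or]
      exact card_union_le _ _

section Vote

variable {C : Type*} [Fintype C] {m : ℕ}

theorem card_filter_lt_eq_val (v : Vote C m) (c : C) : #{a | v a < v c} = (v c : ℕ) :=
  calc
    #{a | v a < v c} = #(Iio (v c)) := card_equiv v (by simp)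
    _ = v c := Fin.card_Iio (v c)

variable [DecidableEq C]

theorem card_filter_lt_and_lt_le_card_discordantPairs (v u : Vote C m) (c : C) :
    #{a | v a < v c ∧ u c < u a} ≤ #(discordantPairs v u) :=
  card_le_card_of_injOn (·, c) (by simp [Set.MapsTo, discordantPairs])
    (Prod.mk_left_injective c).injOn

theorem rankOf_le_rankOf_add_card_discordantPairs (v u : Vote C m) (c : C) :
    rankOf v c ≤ rankOf u c + #(discordantPairs v u) := by
  have position_le : (v c : ℕ) ≤ u c + #(discordantPairs v u) :=
    calc
      (v c : ℕ) = #{a | v a < v c} := (card_filter_lt_eq_val v c).symm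
      _ ≤ #{a | u a < u c} + #{a | v a < v c ∧ u c < u a} :=
        card_filter_lt_le_add_card_filter_lt_and_lt v u.injective c
      _ ≤ u c + #(discordantPairs v u) :=
        add_le_add (card_filter_lt_eq_val u c).le
          (card_filter_lt_and_lt_le_card_discordantPairs v u c)
  unfold rankOf
  omega

end Vote

/-- Let `v_1, …, v_n` and `u_1, …, u_n` be votes on `m` candidates such
that for each `i` the number of pairs discordant between `v_i` and `u_i` is at most `β`.
If a candidate `c` satisfies `rank(c,v_i) > k + β` for every `i`, then
`rank(c,u_i) > k` for every `i`, so the `k`-approval score of `c` in `(u_1,…,u_n)`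
is `0`. -/
theorem low_ranked_candidate_keeps_zero_score
    {C : Type*} [Fintype C] [DecidableEq C] {m k n β : ℕ}
    (v u : Fin n → Vote C m)
    (hdis : ∀ i, (discordantPairs (v i) (u i)).card ≤ β)
    (c : C) (hc : ∀ i, k + β < rankOf (v i) c) :
    (∀ i, k < rankOf (u i) c) ∧
    (Finset.univ.filter fun i => rankOf (u i) c ≤ k).card = 0 := by
  have rank_gt (i : Fin n) : k < rankOf (u i) c :=
    lt_of_add_lt_add_right <|
      calc
        k + β < rankOf (v i) c := hc i
        _ ≤ rankOf (u i) c + #(discordantPairs (v i) (u i)) :=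
          rankOf_le_rankOf_add_card_discordantPairs (v i) (u i) c
        _ ≤ rankOf (u i) c + β := Nat.add_le_add_left (hdis i) _
  exact ⟨rank_gt, card_filter_eq_zero_iff.mpr fun i _ => (rank_gt i).not_ge⟩
end
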